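/- Let K : ℝ^d → ℝ be a probability density with K(−x) = K(x) for all x, with finite absolute moments up to order 4, and with ∫_{ℝ^d} x x^⊤ K(x) dx = m₂ I_d for some m₂ ∈ ℝ. Then for all indices i, j, k, l ∈ {1,…,d}, ∫_{ℝ^d} x_i x_j x_k x_l (K*K − 2K)(x) dx = 2 m₂² (δ_{ij}δ_{kl} + δ_{ik}δ_{jl} + δ_{il}δ_{jk}), where δ is the Kronecker delta. (This is the identity μ₄(K̃) = 6 m₂(K)² 𝒮_{d,4}(vec I_d)^{⊗2} in componentwise form.) -/

import Mathlib

/-! Multiplication by an additive functional `φ` is a derivation of the convolution algebra, because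
`φ x = φ y + φ (x - y)`. Iterating, a monomial `∏ t, φ t` times `f ⋆ g` is the sum over all subsets
`s` of the index set of `(∏ t ∈ s, φ t) f ⋆ (∏ t ∉ s, φ t) g`, and integrating turns each
convolution into a product of two moments. In degree four with centered factors the odd subsets
drop out. For `f = g = K` of mass one, `∅` and `univ` contribute the fourth moment of `K` twice,
which `-2K` cancels, and each of the three pairings of the indices arises from two complementary
pairs. -/

open MeasureTheory ContinuousLinearMap
open scoped Convolution

section MixedMoment

variable {G ι 𝕜 F : Type*} [RCLike 𝕜] [FunLike F G 𝕜]

/-- The function `f` weighted by the monomial `∏ t ∈ s, φ t` in a family of functionals `φ`; on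
`ℝ^d` with `φ t` the coordinate `c t`, this is `∏ t ∈ s, x (c t)` times `f`. -/
def monomialMul (φ : ι → F) (s : Finset ι) (f : G → 𝕜) (x : G) : 𝕜 :=
  (∏ t ∈ s, φ t x) * f x

/-- The moment of `f` for the monomial `∏ t ∈ s, φ t`. Indexing by subsets of `ι`, rather than by
exponents, makes the binomial expansion of a moment of a convolution free of coefficients. -/
noncomputable def mixedMoment [MeasurableSpace G] (μ : Measure G) (φ : ι → F) (s : Finset ι)
    (f : G → 𝕜) : 𝕜 :=
  ∫ x, monomialMul φ s f x ∂μ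

section Basic

variable [MeasurableSpace G] (μ : Measure G) (φ : ι → F) (f : G → 𝕜)

lemma mixedMoment_empty : mixedMoment μ φ ∅ f = ∫ x, f x ∂μ := by
  simp [mixedMoment, monomialMul]

lemma mixedMoment_singleton (t : ι) : mixedMoment μ φ {t} f = ∫ x, φ t x * f x ∂μ := by
  simp [mixedMoment, monomialMul]

lemma mixedMoment_pair [DecidableEq ι] {t u : ι} (htu : t ≠ u) :
    mixedMoment μ φ {t, u} f = ∫ x, φ t x * φ u x * f x ∂μ := by
  simp [mixedMoment, monomialMul, Finset.prod_pair htu]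

end Basic

section Convolution

variable [Fintype ι] [DecidableEq ι] [AddGroup G] [AddMonoidHomClass F G 𝕜]

lemma prod_mul_mul_sub_eq_sum_monomialMul (φ : ι → F) (f g : G → 𝕜) (x y : G) :
    (∏ t, φ t x) * (f y * g (x - y))
      = ∑ s, monomialMul φ s f y * monomialMul φ sᶜ g (x - y) := by
  have hsplit : ∏ t, φ t x = ∏ t, (φ t y + φ t (x - y)) := by simp
  rw [hsplit, Fintype.prod_add, Finset.sum_mul]
  exact Finset.sum_congr rfl fun s _ => mul_mul_mul_comm _ _ _ _

variable [MeasurableSpace G] [MeasurableAdd₂ G] [MeasurableNeg G]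
  {μ : Measure G} [SFinite μ] [μ.IsAddRightInvariant] {φ : ι → F} {f g : G → 𝕜}

lemma monomialMul_univ_convolution_ae_eq (hf : ∀ s, Integrable (monomialMul φ s f) μ)
    (hg : ∀ s, Integrable (monomialMul φ s g) μ) :
    monomialMul φ Finset.univ (f ⋆[mul 𝕜 𝕜, μ] g)
      =ᵐ[μ] fun x => ∑ s, (monomialMul φ s f ⋆[mul 𝕜 𝕜, μ] monomialMul φ sᶜ g) x := by
  have hexists : ∀ᵐ x ∂μ, ∀ s,
      ConvolutionExistsAt (monomialMul φ s f) (monomialMul φ sᶜ g) x (mul 𝕜 𝕜) μ :=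
    ae_all_iff.2 fun s => (hf s).ae_convolution_exists _ (hg sᶜ)
  filter_upwards [hexists] with x hx
  simp only [monomialMul, convolution_mul, ← integral_const_mul,
    prod_mul_mul_sub_eq_sum_monomialMul]
  exact integral_finsetSum _ fun s _ => hx s

omit [DecidableEq ι] in
lemma integrable_monomialMul_univ_convolution (hf : ∀ s, Integrable (monomialMul φ s f) μ)
    (hg : ∀ s, Integrable (monomialMul φ s g) μ) :
    Integrable (monomialMul φ Finset.univ (f ⋆[mul 𝕜 𝕜, μ] g)) μ := by
  classical
  exact (integrable_finsetSum _ fun s _ => (hf s).integrable_convolution _ (hg sᶜ)).congr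
    (monomialMul_univ_convolution_ae_eq hf hg).symm

lemma mixedMoment_univ_convolution (hf : ∀ s, Integrable (monomialMul φ s f) μ)
    (hg : ∀ s, Integrable (monomialMul φ s g) μ) :
    mixedMoment μ φ Finset.univ (f ⋆[mul 𝕜 𝕜, μ] g)
      = ∑ s, mixedMoment μ φ s f * mixedMoment μ φ sᶜ g := by
  rw [mixedMoment, integral_congr_ae (monomialMul_univ_convolution_ae_eq hf hg),
    integral_finsetSum _ fun s _ => (hf s).integrable_convolution _ (hg sᶜ)]
  exact Finset.sum_congr rfl fun s _ => integral_convolution _ (hf s) (hg sᶜ)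

end Convolution

lemma integrable_monomialMul_of_norm_pow_smul {E : Type*} [NormedAddCommGroup E] [NormedSpace ℝ E]
    [MeasurableSpace E] [OpensMeasurableSpace E] {μ : Measure E} {f : E → 𝕜}
    (hf : AEStronglyMeasurable f μ) (φ : ι → E →L[ℝ] 𝕜) (s : Finset ι)
    (hmom : Integrable (fun x => ‖x‖ ^ s.card • f x) μ) :
    Integrable (monomialMul φ s f) μ := by
  have hcont : Continuous fun x => ∏ t ∈ s, φ t x := by fun_prop
  refine (hmom.norm.const_mul (∏ t ∈ s, ‖φ t‖)).mono'
    (hcont.measurable.aestronglyMeasurable.mul hf) (ae_of_all _ fun x => ?_)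
  calc ‖monomialMul φ s f x‖ = (∏ t ∈ s, ‖φ t x‖) * ‖f x‖ := by
        rw [monomialMul, norm_mul, norm_prod]
    _ ≤ (∏ t ∈ s, ‖φ t‖ * ‖x‖) * ‖f x‖ := by
        gcongr with t
        exact (φ t).le_opNorm x
    _ = (∏ t ∈ s, ‖φ t‖) * ‖‖x‖ ^ s.card • f x‖ := by
        rw [Finset.prod_mul_distrib, Finset.prod_const, norm_smul, norm_pow, norm_norm, mul_assoc]

end MixedMoment

lemma integral_eq_zero_of_odd {G E : Type*} [AddGroup G] [MeasurableSpace G] [MeasurableNeg G]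
    [NormedAddCommGroup E] [NormedSpace ℝ E] (μ : Measure G) [μ.IsNegInvariant] {f : G → E}
    (hf : Function.Odd f) : ∫ x, f x ∂μ = 0 := by
  have h := integral_neg_eq_self f μ
  simp only [hf _, integral_neg] at h
  have : IsAddTorsionFree E := .of_isTorsionFree ℝ E
  exact self_eq_neg.1 h.symm

lemma sum_finset_fin_four_mul_compl {R : Type*} [CommSemiring R] (a b : Finset (Fin 4) → R)
    (ha : ∀ t, a {t} = 0) (hb : ∀ t, b {t} = 0) :
    ∑ s, a s * b sᶜ = a ∅ * b Finset.univ + a Finset.univ * b ∅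
      + (a {0, 1} * b {2, 3} + a {2, 3} * b {0, 1}) + (a {0, 2} * b {1, 3} + a {1, 3} * b {0, 2})
      + (a {0, 3} * b {1, 2} + a {1, 2} * b {0, 3}) := by
  let evens : Finset (Finset (Fin 4)) :=
    {∅, Finset.univ, {0, 1}, {2, 3}, {0, 2}, {1, 3}, {0, 3}, {1, 2}}
  have hodd : ∀ s ∉ evens, (∃ t, s = {t}) ∨ ∃ t, sᶜ = {t} := by decide
  have hzero : ∀ s ∉ evens, a s * b sᶜ = 0 := fun s hs => by
    rcases hodd s hs with ⟨t, rfl⟩ | ⟨t, ht⟩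
    · rw [ha, zero_mul]
    · rw [ht, hb, mul_zero]
  rw [← Finset.sum_subset (Finset.subset_univ evens) fun s _ => hzero s]
  iterate 7 rw [Finset.sum_insert (by decide)]
  rw [Finset.sum_singleton, Finset.compl_empty, Finset.compl_univ,
    show ({0, 1} : Finset (Fin 4))ᶜ = {2, 3} by decide,
    show ({2, 3} : Finset (Fin 4))ᶜ = {0, 1} by decide,
    show ({0, 2} : Finset (Fin 4))ᶜ = {1, 3} by decide,
    show ({1, 3} : Finset (Fin 4))ᶜ = {0, 2} by decide,
    show ({0, 3} : Finset (Fin 4))ᶜ = {1, 2} by decide,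
    show ({1, 2} : Finset (Fin 4))ᶜ = {0, 3} by decide]
  ring

lemma integral_mul_convolution_sub_two_mul_of_centered {G 𝕜 F : Type*} [RCLike 𝕜] [AddGroup G]
    [MeasurableSpace G] [MeasurableAdd₂ G] [MeasurableNeg G] [FunLike F G 𝕜]
    [AddMonoidHomClass F G 𝕜] {μ : Measure G} [SFinite μ] [μ.IsAddRightInvariant]
    {φ : Fin 4 → F} {K : G → 𝕜} (hK1 : ∫ x, K x ∂μ = 1)
    (hmean : ∀ t, mixedMoment μ φ {t} K = 0) (hmom : ∀ s, Integrable (monomialMul φ s K) μ) :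
    ∫ x, φ 0 x * φ 1 x * φ 2 x * φ 3 x * ((∫ y, K (x - y) * K y ∂μ) - 2 * K x) ∂μ
      = 2 * (mixedMoment μ φ {0, 1} K * mixedMoment μ φ {2, 3} K
        + mixedMoment μ φ {0, 2} K * mixedMoment μ φ {1, 3} K
        + mixedMoment μ φ {0, 3} K * mixedMoment μ φ {1, 2} K) := by
  have hsplit : ∀ x, φ 0 x * φ 1 x * φ 2 x * φ 3 x * ((∫ y, K (x - y) * K y ∂μ) - 2 * K x)
      = monomialMul φ Finset.univ (K ⋆[mul 𝕜 𝕜, μ] K) x - 2 * monomialMul φ Finset.univ K x := by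
    intro x
    simp only [monomialMul, Fin.prod_univ_four, convolution_mul, mul_comm (K (x - _))]
    ring
  calc _ = mixedMoment μ φ Finset.univ (K ⋆[mul 𝕜 𝕜, μ] K)
        - 2 * mixedMoment μ φ Finset.univ K := by
        simp only [hsplit, mixedMoment]
        rw [integral_sub (integrable_monomialMul_univ_convolution hmom hmom)
          ((hmom _).const_mul 2), integral_const_mul]
    _ = _ := by
        rw [mixedMoment_univ_convolution hmom hmom,
          sum_finset_fin_four_mul_compl (mixedMoment μ φ · K) (mixedMoment μ φ · K) hmean hmean,
          mixedMoment_empty, hK1]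
        ring

theorem fourth_moment_conv_sub_two_smul_general {E 𝕜 : Type*} [RCLike 𝕜] [NormedAddCommGroup E]
    [NormedSpace ℝ E] [MeasurableSpace E] [BorelSpace E] [SecondCountableTopology E]
    {μ : Measure E} [SFinite μ] [μ.IsAddRightInvariant] (φ : Fin 4 → E →L[ℝ] 𝕜) {K : E → 𝕜}
    (hK1 : ∫ x, K x ∂μ = 1) (hmean : ∀ t, ∫ x, φ t x * K x ∂μ = 0)
    (hmom : ∀ k ≤ 4, Integrable (fun x => ‖x‖ ^ k • K x) μ) :
    ∫ x, φ 0 x * φ 1 x * φ 2 x * φ 3 x * ((∫ y, K (x - y) * K y ∂μ) - 2 * K x) ∂μ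
      = 2 * ((∫ x, φ 0 x * φ 1 x * K x ∂μ) * (∫ x, φ 2 x * φ 3 x * K x ∂μ)
        + (∫ x, φ 0 x * φ 2 x * K x ∂μ) * (∫ x, φ 1 x * φ 3 x * K x ∂μ)
        + (∫ x, φ 0 x * φ 3 x * K x ∂μ) * (∫ x, φ 1 x * φ 2 x * K x ∂μ)) := by
  have hK : Integrable K μ := by simpa using hmom 0 (Nat.zero_le 4)
  have hint : ∀ s, Integrable (monomialMul φ s K) μ := fun s =>
    integrable_monomialMul_of_norm_pow_smul hK.aestronglyMeasurable φ s
      (hmom s.card (by simpa using s.card_le_univ))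
  have hcentered : ∀ t, mixedMoment μ φ {t} K = 0 := fun t =>
    (mixedMoment_singleton μ φ K t).trans (hmean t)
  simp only [integral_mul_convolution_sub_two_mul_of_centered hK1 hcentered hint,
    mixedMoment_pair, ne_eq, Fin.reduceEq, not_false_eq_true]

/-- Fourth moment of `K̃ = K*K − 2K`: if `K` is a symmetric probability density on `ℝ^d` with
finite absolute moments up to order 4 and `∫ x xᵀ K(x) dx = m₂ I_d`, then
`∫ x_i x_j x_k x_l K̃(x) dx = 2 m₂² (δ_{ij}δ_{kl} + δ_{ik}δ_{jl} + δ_{il}δ_{jk})`.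
This is `μ₄(K̃) = 6 m₂(K)² 𝒮_{d,4} (vec I_d)^{⊗2}` in componentwise form. -/
theorem fourth_moment_conv_sub_two_smul {d : ℕ} (K : (Fin d → ℝ) → ℝ)
    (hK0 : ∀ x, 0 ≤ K x) (hK1 : ∫ x, K x = 1) (hsym : ∀ x, K (-x) = K x)
    (hmom : ∀ k : ℕ, k ≤ 4 → Integrable fun x => ‖x‖ ^ k * K x)
    (m₂ : ℝ)
    (hm₂ : ∀ i j : Fin d, ∫ x, x i * x j * K x = if i = j then m₂ else 0)
    (i j k l : Fin d) :
    ∫ x, x i * x j * x k * x l * ((∫ y, K (x - y) * K y) - 2 * K x)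
      = 2 * m₂ ^ 2 *
        ((if i = j then (1 : ℝ) else 0) * (if k = l then (1 : ℝ) else 0)
          + (if i = k then (1 : ℝ) else 0) * (if j = l then (1 : ℝ) else 0)
          + (if i = l then (1 : ℝ) else 0) * (if j = k then (1 : ℝ) else 0)) := by
  have hmean : ∀ a : Fin d, ∫ x, x a * K x = 0 := fun a =>
    integral_eq_zero_of_odd volume fun x => by simp [hsym]
  refine (fourth_moment_conv_sub_two_smul_general (fun t => proj (![i, j, k, l] t)) hK1
    (fun t => hmean _) hmom).trans ?_
  simp only [proj_apply, Matrix.cons_val, hm₂, ← mul_boole _ m₂]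
  ring
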